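/- For every real number y with |y| ≤ π, (16/(3π²))·y² ≤ (1/6)·cos(2y) − (8/3)·cos(y) + 5/2. In particular, (1/π²)·y² ≤ (1/6)·cos(2y) − (8/3)·cos(y) + 5/2 for all |y| ≤ π, so for every h > 0 and every ξ with |ξ| ≤ π/h one has (1/π²)·ξ² ≤ ψ_h^{(4)}(ξ). -/

import Mathlib

/-- Discrete symbol of the fourth-order (p = 4) central finite difference
approximation of `-d²/dx²`. -/
noncomputable def psi4 (h ξ : ℝ) : ℝ :=
  ((1/6) * Real.cos (2*ξ*h) - (8/3) * Real.cos (ξ*h) + 5/2) / h^2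

theorem aux_nonneg (y : ℝ) (h0 : 0 ≤ y) (hy : y ≤ Real.pi) :
    (16/(3*Real.pi^2)) * y^2 ≤ (1/6) * Real.cos (2*y) - (8/3) * Real.cos y + 5/2 := by
  have hpi := Real.pi_gt_three
  have hpi2 := Real.pi_lt_d2
  rw [Real.cos_two_mul]
  rcases le_total y (Real.pi/2) with h | h
  · rcases h0.eq_or_lt with rfl | hpos
    · norm_num
    have h1 := Real.sin_gt_sub_cube (x := y/2) (by linarith)
    have h2 : (0.89:ℝ) * (y/2) ≤ Real.sin (y/2) := by
      have : (y/2)^2 ≤ 0.64 := by nlinarith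
      nlinarith
    have h3 : (0.89 * (y/2))^2 ≤ Real.sin (y/2)^2 := by
      apply pow_le_pow_left₀ (by positivity) h2
    have h4 : Real.cos y = 1 - 2 * Real.sin (y/2)^2 := by
      have := Real.cos_two_mul (y/2)
      have h5 := Real.sin_sq_add_cos_sq (y/2)
      rw [show 2 * (y/2) = y by ring] at this
      linarith
    have h6 : 16/(3*Real.pi^2) ≤ (16/27:ℝ) := by
      rw [div_le_div_iff₀ (by positivity) (by norm_num)]
      nlinarith
    have h7 : (16/(3*Real.pi^2)) * y^2 ≤ 16/27 * y^2 := by gcongr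
    rw [h4]
    nlinarith [sq_nonneg (Real.sin (y/2)^2)]
  · have h1 := Real.mul_le_sin (x := y - Real.pi/2) (by linarith) (by linarith)
    rw [Real.sin_sub_pi_div_two] at h1
    have hu : (16/(3*Real.pi^2)) * y^2 = 16/3 * (y/Real.pi)^2 := by field_simp
    have e : 2/Real.pi * (y - Real.pi/2) = 2*(y/Real.pi) - 1 := by field_simp
    rw [e] at h1
    rw [hu]
    have u0 : 0 ≤ y/Real.pi := by positivity
    have u1 : y/Real.pi ≤ 1 := by rw [div_le_one (by positivity)]; exact hy
    generalize y/Real.pi = u at *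
    generalize Real.cos y = c at *
    nlinarith [mul_nonneg u0 (sub_nonneg.2 u1), mul_nonneg (sub_nonneg.2 h1) u0, sq_nonneg (-c - (2*u-1))]

theorem aux_all (y : ℝ) (hy : |y| ≤ Real.pi) :
    (16/(3*Real.pi^2)) * y^2 ≤ (1/6) * Real.cos (2*y) - (8/3) * Real.cos y + 5/2 := by
  rcases le_total 0 y with h | h
  · exact aux_nonneg y h (by rwa [abs_of_nonneg h] at hy)
  · have := aux_nonneg (-y) (by linarith) (by rwa [abs_of_nonpos h] at hy)
    simpa [mul_neg, Real.cos_neg] using this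

theorem aux_weak (y : ℝ) (hy : |y| ≤ Real.pi) :
    (1/Real.pi^2) * y^2 ≤ (1/6) * Real.cos (2*y) - (8/3) * Real.cos y + 5/2 := by
  refine le_trans ?_ (aux_all y hy)
  have e : (16/(3*Real.pi^2)) * y^2 = 16/3 * ((1/Real.pi^2) * y^2) := by field_simp
  have : 0 ≤ (1/Real.pi^2) * y^2 := by positivity
  linarith

/-- For `|y| ≤ π` one has `(16/(3π²))y² ≤ (1/6)cos(2y) − (8/3)cos(y) + 5/2`;
in particular `(1/π²)y² ≤ (1/6)cos(2y) − (8/3)cos(y) + 5/2` for `|y| ≤ π`, so for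
every `h > 0` and `|ξ| ≤ π/h` one has `(1/π²)ξ² ≤ ψ_h^{(4)}(ξ)`. -/
theorem fourth_order_symbol_lower_bound :
    (∀ y : ℝ, |y| ≤ Real.pi →
      (16/(3*Real.pi^2)) * y^2 ≤ (1/6) * Real.cos (2*y) - (8/3) * Real.cos y + 5/2) ∧
    (∀ y : ℝ, |y| ≤ Real.pi →
      (1/Real.pi^2) * y^2 ≤ (1/6) * Real.cos (2*y) - (8/3) * Real.cos y + 5/2) ∧
    (∀ h : ℝ, 0 < h → ∀ ξ : ℝ, |ξ| ≤ Real.pi / h →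
      (1/Real.pi^2) * ξ^2 ≤ psi4 h ξ) := by
  refine ⟨aux_all, aux_weak, ?_⟩
  intro h hh ξ hξ
  have hb : |ξ * h| ≤ Real.pi := by
    rw [abs_mul, abs_of_pos hh]
    exact (le_div_iff₀ hh).1 hξ
  have := aux_weak (ξ * h) hb
  unfold psi4
  rw [le_div_iff₀ (by positivity), show 2*ξ*h = 2*(ξ*h) by ring]
  calc _ = (1/Real.pi^2) * (ξ*h)^2 := by ring
    _ ≤ _ := this
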